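/- Adding an edge within a strongly connected component preserves the E-separation model: let G = (V, E_d) be a directed graph, i, j ∈ V with i ≠ j, (i, j) ∉ E_d, and i ∈ scc_G(j), and let G′ = (V, E_d ∪ {(i, j)}). Then I_E^G = I_E^{G′}. -/

import Mathlib

namespace ESepPaper

/-- A directed mixed graph: directed edges and bidirected edges over a node type `V`.
A directed graph (DG) is a DMG with `Ebi = ∅`. -/
structure DMG (V : Type) where
  Ed : Set (V × V)
  Ebi : Set (Sym2 V)

variable {V : Type}

/-- `G.ancestor u v` : there is a directed path `u → … → v` (possibly trivial). -/
def DMG.ancestor (G : DMG V) : V → V → Prop :=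
  Relation.ReflTransGen (fun u v => (u, v) ∈ G.Ed)

/-- Ancestors of a set `C`. -/
def DMG.anc (G : DMG V) (C : Set V) : Set V := {u | ∃ v ∈ C, G.ancestor u v}

/-- Strongly connected component of `v`. -/
def DMG.scc (G : DMG V) (v : V) : Set V := {w | G.ancestor w v ∧ G.ancestor v w}

/-- Parents of a set of nodes. -/
def DMG.pa (G : DMG V) (S : Set V) : Set V := {w | ∃ v ∈ S, (w, v) ∈ G.Ed}

/-- Kind of a traversed edge on a walk: forward directed, backward directed, or bidirected. -/
inductive LinkType | fwd | bwd | bi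
deriving DecidableEq

/-- Validity of a link of kind `t` between consecutive walk nodes `u` and `v`. -/
def DMG.linkOK (G : DMG V) (u v : V) : LinkType → Prop
  | .fwd => (u, v) ∈ G.Ed
  | .bwd => (v, u) ∈ G.Ed
  | .bi => s(u, v) ∈ G.Ebi

/-- Arrowhead at the second (right) endpoint of the link. -/
def LinkType.headR : LinkType → Prop
  | .fwd => True
  | .bwd => False
  | .bi => True

/-- Arrowhead at the first (left) endpoint of the link. -/
def LinkType.headL : LinkType → Prop
  | .fwd => False
  | .bwd => True
  | .bi => True

/-- Tail at the second (right) endpoint. -/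
def LinkType.tailR (t : LinkType) : Prop := t = .bwd

/-- Tail at the first (left) endpoint. -/
def LinkType.tailL (t : LinkType) : Prop := t = .fwd

/-- Walks in a DMG. -/
inductive DMG.Walk (G : DMG V) : V → V → Type
  | nil (v : V) : DMG.Walk G v v
  | cons {u v w : V} (t : LinkType) (h : G.linkOK u v t) (p : DMG.Walk G v w) : DMG.Walk G u w

/-- An interior node on a walk, whose incoming link is `t1` and outgoing link is `t2`,
is a collider iff both links have an arrowhead at it. -/
def colliderAt (t1 t2 : LinkType) : Prop := t1.headR ∧ t2.headL

/-- An interior non-collider `v` between neighbours `u` (incoming link `t1`) and `w`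
(outgoing link `t2`) is unblockable: on every side where the link has a tail at `v`, the
corresponding neighbour lies in `scc_G(v)` (left-chain/right-chain/fork cases). -/
def unblockableAt (G : DMG V) (u v w : V) (t1 t2 : LinkType) : Prop :=
  (t1.tailR → u ∈ G.scc v) ∧ (t2.tailL → w ∈ G.scc v)

namespace DMG.Walk

variable {G : DMG V}

/-- First node of a walk. -/
def first {a b : V} (_ : G.Walk a b) : V := a

def length : {a b : V} → G.Walk a b → ℕ
  | _, _, .nil _ => 0
  | _, _, .cons _ _ p => p.length + 1

def support : {a b : V} → G.Walk a b → List V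
  | a, _, .nil _ => [a]
  | a, _, .cons _ _ p => a :: p.support

/-- Auxiliary: σ-openness of the remainder of a walk, where `u` is the previous node and
`t1` the link from `u` into the current first node. -/
def sigmaOpenAux (C : Set V) : (u : V) → LinkType → {b c : V} → G.Walk b c → Prop
  | _, _, _, _, .nil _ => True
  | u, t1, v, _, .cons t2 _ q =>
      ((colliderAt t1 t2 → v ∈ G.anc C) ∧
       (¬ colliderAt t1 t2 → ¬ unblockableAt G u v q.first t1 t2 → v ∉ C)) ∧
      sigmaOpenAux C v t2 q

/-- The walk is σ-open given `C`: every collider on it is an ancestor of a node of `C`, and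
no blockable non-collider on it lies in `C`. -/
def sigmaOpen (C : Set V) : {a b : V} → G.Walk a b → Prop
  | _, _, .nil _ => True
  | a, _, .cons t _ q => sigmaOpenAux C a t q

/-- All links are forward directed. -/
def IsDirected : {a b : V} → G.Walk a b → Prop
  | _, _, .nil _ => True
  | _, _, .cons t _ p => t = .fwd ∧ p.IsDirected

/-- Interior nodes of the walk (all nodes except the two endpoints). -/
def interior {a b : V} (p : G.Walk a b) : List V := p.support.tail.dropLast

/-- Arrowhead at the first endpoint. -/
def headAtStart : {a b : V} → G.Walk a b → Prop
  | _, _, .nil _ => False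
  | _, _, .cons t _ _ => t.headL

def headAtEndAux : LinkType → {a b : V} → G.Walk a b → Prop
  | t, _, _, .nil _ => t.headR
  | _, _, _, .cons t _ q => headAtEndAux t q

/-- Arrowhead at the last endpoint. -/
def headAtEnd : {a b : V} → G.Walk a b → Prop
  | _, _, .nil _ => False
  | _, _, .cons t _ q => headAtEndAux t q

def noCollidersAux : LinkType → {a b : V} → G.Walk a b → Prop
  | _, _, _, .nil _ => True
  | t1, _, _, .cons t2 _ q => ¬ colliderAt t1 t2 ∧ noCollidersAux t2 q

/-- There is no collider on the walk. -/
def NoColliders : {a b : V} → G.Walk a b → Prop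
  | _, _, .nil _ => True
  | _, _, .cons t _ q => noCollidersAux t q

def collidersInAux (S : Set V) : LinkType → {a b : V} → G.Walk a b → Prop
  | _, _, _, .nil _ => True
  | t1, v, _, .cons t2 _ q => (colliderAt t1 t2 → v ∈ S) ∧ collidersInAux S t2 q

/-- Every collider on the walk lies in `S`. -/
def CollidersIn (S : Set V) : {a b : V} → G.Walk a b → Prop
  | _, _, .nil _ => True
  | _, _, .cons t _ q => collidersInAux S t q

def noncollUnblAux : (u : V) → LinkType → {b c : V} → G.Walk b c → Prop
  | _, _, _, _, .nil _ => True
  | u, t1, v, _, .cons t2 _ q =>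
      (¬ colliderAt t1 t2 → unblockableAt G u v q.first t1 t2) ∧ noncollUnblAux v t2 q

/-- Every interior non-collider on the walk is unblockable. -/
def NoncollidersUnblockable : {a b : V} → G.Walk a b → Prop
  | _, _, .nil _ => True
  | a, _, .cons t _ q => noncollUnblAux a t q

/-- The set of edges occurring on a walk (directed edges as ordered pairs in `E_d`,
bidirected edges as unordered pairs). -/
def edges : {a b : V} → G.Walk a b → Set ((V × V) ⊕ Sym2 V)
  | _, _, .nil _ => ∅
  | a, _, .cons t _ p =>
      insert (match t with
        | .fwd => Sum.inl (a, p.first)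
        | .bwd => Sum.inl (p.first, a)
        | .bi => Sum.inr s(a, p.first)) p.edges

/-- Concatenation of walks. -/
def append : {a b c : V} → G.Walk a b → G.Walk b c → G.Walk a c
  | _, _, _, .nil _, q => q
  | _, _, _, .cons t h p, q => .cons t h (p.append q)

/-- A walk `v_0, …, v_{n+1}` is a path if no node besides the final endpoint occurs more
than once, i.e. `v_0, …, v_n` are pairwise distinct. -/
def IsPath {a b : V} (p : G.Walk a b) : Prop := p.support.dropLast.Nodup

end DMG.Walk

/-- `A` is σ-separated from `B` given `C` in `G`: every walk from a node of `A` to a node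
of `B` is σ-blocked given `C`. -/
def DMG.sigmaSep (G : DMG V) (A B C : Set V) : Prop :=
  ∀ a ∈ A, ∀ b ∈ B, ∀ p : G.Walk a b, ¬ p.sigmaOpen C

/-- The lifted dependency graph of `G`, on two copies of `V`
(`Sum.inl` is the past copy `V_0`, `Sum.inr` the future copy `V_1`). -/
def DMG.lift (G : DMG V) : DMG (V ⊕ V) where
  Ed := {e | ∃ u v, (u, v) ∈ G.Ed ∧
        (e = (Sum.inl u, Sum.inl v) ∨ e = (Sum.inl u, Sum.inr v) ∨
         e = (Sum.inr u, Sum.inr v))}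
  Ebi := {e | ∃ u v, s(u, v) ∈ G.Ebi ∧
        (e = s(Sum.inl u, Sum.inl v) ∨ e = s(Sum.inl u, Sum.inr v) ∨
         e = s(Sum.inr u, Sum.inl v) ∨ e = s(Sum.inr u, Sum.inr v))}

/-- `B` is E-separated from `A` given `C` in `G`:
`A_0` is σ-separated from `B_1` given `C_0 ∪ (C_1 \ B_1)` in the lifted dependency graph. -/
def DMG.ESep (G : DMG V) (A B C : Set V) : Prop :=
  G.lift.sigmaSep (Sum.inl '' A) (Sum.inr '' B)
    ((Sum.inl '' C) ∪ ((Sum.inr '' C) \ (Sum.inr '' B)))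

/-- The independence model `I_E^G` of E-separation triples. -/
def DMG.IE (G : DMG V) : Set (Set V × Set V × Set V) :=
  {t | G.ESep t.1 t.2.1 t.2.2}


/-- The latent projection of `G` onto the observed nodes `O`: a directed edge when there is
a non-trivial directed walk whose interior nodes are all latent, and a bidirected edge when
there is a non-trivial collider-free walk with arrowheads at both endpoints whose interior
nodes are all latent. -/
def DMG.latentProj (G : DMG V) (O : Set V) : DMG O where
  Ed := {e | ∃ p : G.Walk e.1.val e.2.val,
          p.IsDirected ∧ 0 < p.length ∧ ∀ x ∈ p.interior, x ∉ O}
  Ebi := {e | ∃ u v : O, e = s(u, v) ∧ ∃ p : G.Walk u.val v.val,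
          p.headAtStart ∧ p.headAtEnd ∧ p.NoColliders ∧ 0 < p.length ∧
          ∀ x ∈ p.interior, x ∉ O}

/-- The last edge of the walk `p` before entering `scc_G(w)` has an arrowhead at its
endpoint in `scc_G(w)` (vacuous if the walk never leaves `scc_G(w)`). -/
def DMG.lastEdgeInto (G : DMG V) {a b : V} (w : V) (p : G.Walk a b) : Prop :=
  (∀ x ∈ p.support, x ∈ G.scc w) ∨
  ∃ (x y : V) (t : LinkType) (h : G.linkOK x y t) (p₁ : G.Walk a x) (p₂ : G.Walk y b),
    p = p₁.append (.cons t h p₂) ∧ x ∉ G.scc w ∧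
    (∀ z ∈ p₂.support, z ∈ G.scc w) ∧ t.headR

/-- An (asymmetric) inducing path from `v` to `w`: a non-trivial path such that every
collider on it is an ancestor of `v` or `w`, every interior non-collider is unblockable,
and the last edge before entering `scc_G(w)` points into `scc_G(w)`. -/
def DMG.IsInducingPath (G : DMG V) {v w : V} (p : G.Walk v w) : Prop :=
  0 < p.length ∧ p.IsPath ∧
  p.CollidersIn (G.anc {v, w}) ∧ p.NoncollidersUnblockable ∧ G.lastEdgeInto w p

/-!
Let `K` be `H` with the edge `(i, j)` added. Since `i ≠ j` are strongly connected, a directed path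
from `i` to `j` starts with an edge `i → x`, `x ∈ scc_H(j)`. Thus every edge of `K` can be replaced
by an edge of `H` with the same source and a target in the same strongly connected component, and a
σ-open walk in `K` is rerouted link by link in `H`: a link `u → v` becomes `u → x → ⋯ → v` and a
link `v ← u` becomes `v ← ⋯ ← x ← u`, where the detour between `x` and `v` stays inside `scc_H(v)`.
All nodes inserted by the detour are non-colliders with their tails pointing within `scc_H(v)`,
hence unblockable. At an old node no arrowhead changes, and a neighbour across a tail moves only
within its strongly connected component. The replacement property of edges passes from a graph to
its lifted dependency graph.
-/

namespace DMG

variable {G H K : DMG V} {C : Set V} {a b c u u' v w w' x : V} {t t₁ t₂ : LinkType}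

theorem ancestor_map {W : Type} {L : DMG W} (f : V → W)
    (hf : ∀ a b, (a, b) ∈ G.Ed → L.ancestor (f a) (f b)) (h : G.ancestor u v) :
    L.ancestor (f u) (f v) :=
  Relation.ReflTransGen.lift' f hf u v h

theorem mem_scc_map {W : Type} {L : DMG W} (f : V → W)
    (hf : ∀ a b, (a, b) ∈ G.Ed → L.ancestor (f a) (f b)) (h : u ∈ G.scc v) :
    f u ∈ L.scc (f v) :=
  ⟨ancestor_map f hf h.1, ancestor_map f hf h.2⟩

theorem mem_scc_self (G : DMG V) (v : V) : v ∈ G.scc v := ⟨.refl, .refl⟩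

theorem scc_eq_of_mem (h : w ∈ G.scc v) : G.scc w = G.scc v :=
  Set.ext fun _ => ⟨fun hx => ⟨hx.1.trans h.1, h.2.trans hx.2⟩,
    fun hx => ⟨hx.1.trans h.2, h.1.trans hx.2⟩⟩

theorem exists_edge_to_mem_scc (hne : u ≠ v) (h : u ∈ G.scc v) :
    ∃ x ∈ G.scc v, (u, x) ∈ G.Ed := by
  obtain rfl | ⟨x, hux, hxv⟩ := Relation.ReflTransGen.cases_head h.1
  · exact (hne rfl).elim
  · exact ⟨x, ⟨hxv, h.2.tail hux⟩, hux⟩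

/-- The condition that a σ-open walk given `C` imposes on an interior node `v` with incoming link
`t₁` from `u` and outgoing link `t₂` to `w`. -/
def OpenAt (G : DMG V) (C : Set V) (u v w : V) (t₁ t₂ : LinkType) : Prop :=
  (colliderAt t₁ t₂ → v ∈ G.anc C) ∧
    (¬ colliderAt t₁ t₂ → ¬ unblockableAt G u v w t₁ t₂ → v ∉ C)

theorem OpenAt.imp (h : K.OpenAt C u v w t₁ t₂) (hanc : v ∈ K.anc C → v ∈ H.anc C)
    (hunblockable : unblockableAt K u v w t₁ t₂ → unblockableAt H u' v w' t₁ t₂) :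
    H.OpenAt C u' v w' t₁ t₂ :=
  ⟨hanc ∘ h.1, fun hcol hblock => h.2 hcol (hblock ∘ hunblockable)⟩

theorem OpenAt.of_unblockableAt (hcol : ¬ colliderAt t₁ t₂)
    (hunblockable : unblockableAt G u v w t₁ t₂) : G.OpenAt C u v w t₁ t₂ :=
  ⟨fun h => (hcol h).elim, fun _ h => (h hunblockable).elim⟩

theorem openAt_fwd_fwd (hw : w ∈ G.scc v) : G.OpenAt C u v w .fwd .fwd :=
  .of_unblockableAt (fun h => h.2) ⟨nofun, fun _ => hw⟩

theorem openAt_bwd_bwd (hu : u ∈ G.scc v) : G.OpenAt C u v w .bwd .bwd :=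
  .of_unblockableAt (fun h => h.1) ⟨fun _ => hu, nofun⟩

namespace Walk

theorem sigmaOpenAux_cons {h : G.linkOK v w t₂} {p : G.Walk w c} :
    (cons t₂ h p).sigmaOpenAux C u t₁ ↔ G.OpenAt C u v w t₁ t₂ ∧ p.sigmaOpenAux C v t₂ :=
  Iff.rfl

theorem sigmaOpenAux.sigmaOpen {p : G.Walk v c} (hp : p.sigmaOpenAux C u t) : p.sigmaOpen C := by
  cases p with
  | nil => trivial
  | cons => exact hp.2

theorem sigmaOpenAux.change_prev {p : G.Walk v c} (hp : p.sigmaOpenAux C u t)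
    (hu : t.tailR → u ∈ G.scc v → u' ∈ G.scc v) : p.sigmaOpenAux C u' t := by
  cases p with
  | nil => trivial
  | cons =>
    obtain ⟨hopen, hp⟩ := sigmaOpenAux_cons.1 hp
    exact ⟨hopen.imp id (And.imp_left fun h ht => hu ht (h ht)), hp⟩

theorem exists_sigmaOpenAux_fwd_of_mem_scc {p : G.Walk v c} (hp : p.sigmaOpenAux C u .fwd)
    (hx : x ∈ G.scc v) : ∃ q : G.Walk x c, q.sigmaOpenAux C u .fwd := by
  obtain ⟨hxv, hvx⟩ := hx
  induction hxv using Relation.ReflTransGen.head_induction_on with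
  | refl => exact ⟨p, hp⟩
  | @head y z hyz hzv ih =>
    obtain ⟨q, hq⟩ := ih (hvx.tail hyz)
    have hzy : z ∈ G.scc y := ⟨hzv.trans hvx, .single hyz⟩
    exact ⟨cons .fwd hyz q, openAt_fwd_fwd hzy, hq.change_prev nofun⟩

theorem exists_sigmaOpenAux_bwd_of_mem_scc (hwx : (w, x) ∈ G.Ed) {p : G.Walk w c}
    (hp : p.sigmaOpenAux C x .bwd) (hx : x ∈ G.scc v) :
    ∃ y, (y, v) ∈ G.Ed ∧ ∃ q : G.Walk y c, q.sigmaOpenAux C v .bwd := by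
  obtain ⟨hxv, hvx⟩ := hx
  induction hxv with
  | refl => exact ⟨w, hwx, p, hp⟩
  | @tail y z hxy hyz ih =>
    obtain ⟨y', hy', q, hq⟩ := ih (.head hyz hvx)
    have hzy : z ∈ G.scc y := ⟨hvx.trans hxy, .single hyz⟩
    exact ⟨y, hyz, cons .bwd hy' q, openAt_bwd_bwd hzy, hq⟩

end Walk

/-- `K` is a subgraph of `H` up to moving the targets of directed edges within strongly connected
components of `H`. Under this relation σ-open walks of `K` can be rerouted to σ-open
walks of `H`. -/
structure SubUpToScc (K H : DMG V) : Prop where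
  exists_edge : ∀ ⦃u v⦄, (u, v) ∈ K.Ed → ∃ x ∈ H.scc v, (u, x) ∈ H.Ed
  Ebi_subset : K.Ebi ⊆ H.Ebi

namespace SubUpToScc

theorem of_subset (hEd : K.Ed ⊆ H.Ed) (hEbi : K.Ebi ⊆ H.Ebi) : K.SubUpToScc H :=
  ⟨fun _ v huv => ⟨v, H.mem_scc_self v, hEd huv⟩, hEbi⟩

theorem ancestor (hKH : K.SubUpToScc H) (h : K.ancestor u v) : H.ancestor u v :=
  ancestor_map id (fun _ _ hab =>
    let ⟨_, hx, hax⟩ := hKH.exists_edge hab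
    .head hax hx.1) h

theorem anc_subset (hKH : K.SubUpToScc H) : K.anc C ⊆ H.anc C :=
  fun _ ⟨v, hv, h⟩ => ⟨v, hv, hKH.ancestor h⟩

theorem scc_subset (hKH : K.SubUpToScc H) : K.scc v ⊆ H.scc v :=
  fun _ h => ⟨hKH.ancestor h.1, hKH.ancestor h.2⟩

theorem openAt (hKH : K.SubUpToScc H) (hw : t₂.tailL → w' ∈ H.scc w)
    (h : K.OpenAt C u v w t₁ t₂) : H.OpenAt C u v w' t₁ t₂ :=
  h.imp (hKH.anc_subset ·) fun hunblockable =>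
    ⟨fun ht => hKH.scc_subset (hunblockable.1 ht), fun ht =>
      scc_eq_of_mem (hKH.scc_subset (hunblockable.2 ht)) ▸ hw ht⟩

theorem exists_linkOK_sigmaOpenAux (hKH : K.SubUpToScc H) (hlink : K.linkOK u v t) {p : H.Walk v c}
    (hp : p.sigmaOpenAux C u t) :
    ∃ w, (t.tailL → w ∈ H.scc v) ∧ H.linkOK u w t ∧ ∃ q : H.Walk w c, q.sigmaOpenAux C u t := by
  cases t with
  | fwd =>
    obtain ⟨x, hx, hux⟩ := hKH.exists_edge hlink
    exact ⟨x, fun _ => hx, hux, Walk.exists_sigmaOpenAux_fwd_of_mem_scc hp hx⟩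
  | bwd =>
    obtain ⟨x, hx, hvx⟩ := hKH.exists_edge hlink
    have hpx : p.sigmaOpenAux C x .bwd := hp.change_prev fun _ huv => scc_eq_of_mem huv ▸ hx
    obtain ⟨w, hwu, q, hq⟩ := Walk.exists_sigmaOpenAux_bwd_of_mem_scc hvx hpx hx
    exact ⟨w, nofun, hwu, q, hq⟩
  | bi => exact ⟨v, nofun, hKH.Ebi_subset hlink, p, hp⟩

theorem exists_sigmaOpen (hKH : K.SubUpToScc H) (p : K.Walk a b) (hp : p.sigmaOpen C) :
    ∃ q : H.Walk a b, q.sigmaOpen C ∧ ∀ u t, p.sigmaOpenAux C u t → q.sigmaOpenAux C u t := by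
  induction p with
  | nil v => exact ⟨.nil v, trivial, fun _ _ _ => trivial⟩
  | cons t hlink p ih =>
    obtain ⟨q, -, hpq⟩ := ih (Walk.sigmaOpenAux.sigmaOpen hp)
    obtain ⟨w, hw, hlink', r, hr⟩ := hKH.exists_linkOK_sigmaOpenAux hlink (hpq _ _ hp)
    exact ⟨.cons t hlink' r, hr, fun _ _ h => ⟨hKH.openAt hw h.1, hr⟩⟩

theorem sigmaSep (hKH : K.SubUpToScc H) {A B : Set V} (h : H.sigmaSep A B C) :
    K.sigmaSep A B C := fun a ha b hb p hp =>
  let ⟨q, hq, _⟩ := hKH.exists_sigmaOpen p hp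
  h a ha b hb q hq

end SubUpToScc

theorem inl_mem_scc_lift (h : u ∈ G.scc v) : Sum.inl u ∈ G.lift.scc (Sum.inl v) :=
  mem_scc_map Sum.inl (fun a b hab => .single ⟨a, b, hab, .inl rfl⟩) h

theorem inr_mem_scc_lift (h : u ∈ G.scc v) : Sum.inr u ∈ G.lift.scc (Sum.inr v) :=
  mem_scc_map Sum.inr (fun a b hab => .single ⟨a, b, hab, .inr (.inr rfl)⟩) h

theorem SubUpToScc.lift (hKH : K.SubUpToScc H) : K.lift.SubUpToScc H.lift where
  exists_edge := by
    rintro _ _ ⟨u, v, huv, he⟩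
    obtain ⟨x, hx, hux⟩ := hKH.exists_edge huv
    rcases he with he | he | he <;> obtain ⟨rfl, rfl⟩ := Prod.mk.inj he
    · exact ⟨.inl x, inl_mem_scc_lift hx, u, x, hux, .inl rfl⟩
    · exact ⟨.inr x, inr_mem_scc_lift hx, u, x, hux, .inr (.inl rfl)⟩
    · exact ⟨.inr x, inr_mem_scc_lift hx, u, x, hux, .inr (.inr rfl)⟩
  Ebi_subset := fun _ ⟨u, v, huv, he⟩ => ⟨u, v, hKH.Ebi_subset huv, he⟩

theorem SubUpToScc.IE_subset (hKH : K.SubUpToScc H) : H.IE ⊆ K.IE :=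
  fun _ h => hKH.lift.sigmaSep h

theorem insert_edge_subUpToScc (hne : u ≠ v) (h : u ∈ G.scc v) :
    (DMG.mk (insert (u, v) G.Ed) G.Ebi).SubUpToScc G where
  exists_edge := by
    rintro a b (hab | hab)
    · obtain ⟨rfl, rfl⟩ := Prod.mk.inj hab
      exact exists_edge_to_mem_scc hne h
    · exact ⟨b, G.mem_scc_self b, hab⟩
  Ebi_subset := subset_rfl

end DMG

theorem add_edge_within_scc_general (G : DMG V) {i j : V} (hij : i ≠ j) (hscc : i ∈ G.scc j) :
    G.IE = (DMG.mk (insert (i, j) G.Ed) G.Ebi).IE :=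
  have hsub : G.SubUpToScc (DMG.mk (insert (i, j) G.Ed) G.Ebi) :=
    .of_subset (Set.subset_insert _ _) subset_rfl
  Set.Subset.antisymm (DMG.insert_edge_subUpToScc hij hscc).IE_subset hsub.IE_subset

/-- Adding a directed edge within a strongly connected component preserves the
E-separation independence model. -/
theorem add_edge_within_scc {V : Type} [Fintype V] (G : DMG V) (hG : G.Ebi = ∅)
    (i j : V) (hij : i ≠ j) (hE : (i, j) ∉ G.Ed) (hscc : i ∈ G.scc j) :
    G.IE = (DMG.mk (insert (i, j) G.Ed) G.Ebi).IE :=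
  add_edge_within_scc_general G hij hscc

end ESepPaper
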